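/- Part (3) of Lemma 5: 4·(η₃ + 2η₀ + 3η₁)·(η₁ + 2η₂ + 3η₃) ≡ 2(3−4y)·H + 5p + 9 (mod (4^p − 1)/3). -/

import Mathlib

open Finset

/-- The cyclotomic class `D_i` of order 4 modulo `p` with respect to the
primitive root `θ`: `{θ^(i+4j) mod p : 0 ≤ j < (p-1)/4}`. -/
def cycD (p θ i : ℕ) : Finset ℕ :=
  (Finset.range ((p - 1) / 4)).image fun j => θ ^ (i + 4 * j) % p

/-- `η_i = Σ_{t ∈ D_i} 4^t` as an integer. -/
def eta4 (p θ : ℕ) (i : ℕ) : ℤ := ∑ t ∈ cycD p θ i, (4 : ℤ) ^ t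

/-- `H = η₀ + η₂ − η₁ − η₃`. -/
def Hval (p θ : ℕ) : ℤ := eta4 p θ 0 + eta4 p θ 2 - eta4 p θ 1 - eta4 p θ 3

/-!
Let `χ` be the quartic character with `χ θ = i`. Orthogonality of its powers writes the Gauss
periods at `ζ_p` through the Gauss sums `G` of `χ`, `G'` of `χ⁻¹` and `S` of `χ²`. With
`X = (1 - i) G + (1 + i) G'` the two factors on the left become `(X - (3 + S)) / 2` and
`-(X + (3 + S)) / 2`, so the left side is `(3 + S)² - X²`, while `H` becomes `S`. Writing the Jacobi
sum `J(χ, χ)` as `a + b i`, one has `S² = p` and `X² = 4 b S - 4 p`. Moreover `a² + b² = p`, and the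
value of the cyclotomic number says `a + 2 b = 4 y - x`; together these leave only `b = 2 y`.
An identity between integer polynomials at `ζ_p` is a congruence modulo `Φ_p`, and
`Φ_p(4) = (4 ^ p - 1) / 3`.
-/

theorem ne_one_of_orderOf_eq_four {G : Type*} [Monoid G] {g : G} (hg : orderOf g = 4) : g ≠ 1 := by
  rintro rfl
  simp at hg

theorem sq_ne_one_of_orderOf_eq_four {G : Type*} [Monoid G] {g : G} (hg : orderOf g = 4) :
    g ^ 2 ≠ 1 :=
  pow_ne_one_of_lt_orderOf two_ne_zero (by omega)

theorem inv_sq_of_orderOf_eq_four {G : Type*} [Group G] {g : G} (hg : orderOf g = 4) :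
    (g ^ 2)⁻¹ = g ^ 2 := by
  rw [inv_eq_iff_mul_eq_one, ← pow_add, ← pow_orderOf_eq_one g, hg]

theorem pow_three_of_orderOf_eq_four {G : Type*} [Group G] {g : G} (hg : orderOf g = 4) :
    g ^ 3 = g⁻¹ :=
  eq_inv_of_mul_eq_one_left (by rw [← pow_succ, ← pow_orderOf_eq_one g, hg])

theorem eq_two_mul_of_sq_add_sq_eq_prime {p : ℕ} (hp : p.Prime) {x y a b : ℤ}
    (hxy : (p : ℤ) = x ^ 2 + 4 * y ^ 2) (hab : a ^ 2 + b ^ 2 = p) (h : a + 2 * b = 4 * y - x) :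
    b = 2 * y := by
  obtain rfl : a = 4 * y - x - 2 * b := by linarith
  have heven : Even b := by
    have hsq : b ^ 2 = 2 * (4 * x * y + 8 * y * b - 2 * x * b - 6 * y ^ 2 - 2 * b ^ 2) := by
      linear_combination hab + hxy
    exact (Int.even_pow.mp (even_iff_two_dvd.mpr ⟨_, hsq⟩)).1
  obtain ⟨c, rfl⟩ := even_iff_exists_two_mul.mp heven
  have hmul : (c - y) * (5 * c - (3 * y - 2 * x)) = 0 := by linarith
  -- The second factor gives the other rational point common to line and circle: it forces `5 ∣ p`.
  rcases mul_eq_zero.mp hmul with hc | hc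
  · rw [sub_eq_zero.mp hc]
  have hp5 : p = 5 := by
    have hdvd : (5 : ℤ) ∣ 4 * p :=
      ⟨5 * y ^ 2 - 6 * y * c + 5 * c ^ 2, by
        linear_combination 4 * hxy + (2 * x + 3 * y - 5 * c) * hc⟩
    have : 5 ∣ p := by omega
    exact ((Nat.prime_dvd_prime_iff_eq Nat.prime_five hp).mp this).symm
  rw [hp5, Nat.cast_ofNat] at hxy
  obtain ⟨hx1, hx2⟩ : -2 ≤ x ∧ x ≤ 2 := by constructor <;> nlinarith
  obtain ⟨hy1, hy2⟩ : -1 ≤ y ∧ y ≤ 1 := by constructor <;> nlinarith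
  interval_cases x <;> interval_cases y <;> omega

open Polynomial in
theorem eval_cyclotomic_dvd_aeval_of_aeval_eq_zero {K : Type*} [Field K] [CharZero K] {n : ℕ}
    (hn : 0 < n) {ζ : K} (hζ : IsPrimitiveRoot ζ n) {P : ℤ[X]} (hP : aeval ζ P = 0) {R : Type*}
    [CommRing R] (β : R) : (cyclotomic n R).eval β ∣ aeval β P := by
  have hdvd : cyclotomic n ℤ ∣ P := by
    rw [cyclotomic_eq_minpoly hζ hn]
    exact minpoly.isIntegrallyClosed_dvd (hζ.isIntegral hn) hP
  simpa [aeval_def, eval₂_eq_eval_map] using map_dvd (aeval β) hdvd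

section CharacterSums

theorem sum_inv_pow_mul_mulChar_pow {M K : Type*} [CommMonoid M] [Field K] [DecidableEq K]
    {χ : MulChar M K} {n : ℕ} (hχ : χ ^ n = 1) {z : K} (hz : z ^ n = 1) (a : M) :
    ∑ j ∈ range n, z⁻¹ ^ j * (χ ^ j) a = if χ a = z then (n : K) else 0 := by
  rcases eq_or_ne n 0 with rfl | hn
  · simp
  have hz0 : z ≠ 0 := by
    rintro rfl
    simp [hn] at hz
  by_cases ha : IsUnit a
  · have hterm (j : ℕ) : z⁻¹ ^ j * (χ ^ j) a = (z⁻¹ * χ a) ^ j := by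
      rw [← ha.unit_spec, MulChar.pow_apply_coe, mul_pow]
    have hroot : (z⁻¹ * χ a) ^ n = 1 := by
      rw [← hterm, hχ, MulChar.one_apply ha, inv_pow, hz, inv_one, one_mul]
    simp only [hterm]
    split_ifs with h
    · simp [h, hz0]
    · have hne : z⁻¹ * χ a ≠ 1 := fun h1 => h (by rwa [inv_mul_eq_one₀ hz0, eq_comm] at h1)
      rw [geom_sum_eq hne, hroot, sub_self, zero_div]
  · simp [MulChar.map_nonunit _ ha, hz0.symm]

variable {R K : Type*} [CommRing R] [Fintype R] [DecidableEq K]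

/-- The Gauss period of `χ` at `z`: the sum of the additive character `ψ` over the fibre
`χ = z`. When `χ` has order `n` and `z` runs over the `n`-th roots of unity, these fibres are the
cyclotomic classes of order `n`. -/
def gaussPeriod [CommRing K] (χ : MulChar R K) (ψ : AddChar R K) (z : K) : K :=
  ∑ a with χ a = z, ψ a

/-- The cyclotomic number of `χ` at `(z, w)`: the number of `a` in the class `χ = z` whose
successor lies in the class `χ = w`. For `χ` sending a generator to `ω`, the classical `(i, j)` is
`cyclotomicNumber χ (ω ^ i) (ω ^ j)`. -/
def cyclotomicNumber [CommMonoidWithZero K] (χ : MulChar R K) (z w : K) : ℕ :=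
  #{a | χ a = z ∧ χ (a + 1) = w}

theorem card_mul_gaussPeriod [Field K] {χ : MulChar R K} {n : ℕ} (hχ : χ ^ n = 1)
    (ψ : AddChar R K) {z : K} (hz : z ^ n = 1) :
    n * gaussPeriod χ ψ z = ∑ j ∈ range n, z⁻¹ ^ j * gaussSum (χ ^ j) ψ := by
  calc n * gaussPeriod χ ψ z
      = ∑ a, (if χ a = z then (n : K) else 0) * ψ a := by
        simp [gaussPeriod, mul_sum, sum_filter, ite_mul]
    _ = ∑ a, ∑ j ∈ range n, z⁻¹ ^ j * ((χ ^ j) a * ψ a) := by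
        simp only [← sum_inv_pow_mul_mulChar_pow hχ hz, sum_mul, mul_assoc]
    _ = ∑ j ∈ range n, z⁻¹ ^ j * gaussSum (χ ^ j) ψ := by
        rw [sum_comm]
        simp only [gaussSum, mul_sum]

theorem sq_mul_cyclotomicNumber [Field K] {χ : MulChar R K} {n : ℕ} (hχ : χ ^ n = 1)
    {z w : K} (hz : z ^ n = 1) (hw : w ^ n = 1) :
    (n : K) ^ 2 * cyclotomicNumber χ z w =
      ∑ i ∈ range n, ∑ j ∈ range n,
        z⁻¹ ^ i * w⁻¹ ^ j * (χ ^ i) (-1) * jacobiSum (χ ^ i) (χ ^ j) := by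
  calc (n : K) ^ 2 * cyclotomicNumber χ z w
      = ∑ a, (if χ a = z then (n : K) else 0) * (if χ (a + 1) = w then (n : K) else 0) := by
        simp only [cyclotomicNumber, natCast_card_filter, mul_sum, ite_and, sq, mul_ite, ite_mul,
          mul_one, mul_zero, zero_mul]
        refine sum_congr rfl fun a _ => ?_
        split_ifs <;> rfl
    _ = ∑ a, (if χ (-a) = z then (n : K) else 0) * (if χ (1 - a) = w then (n : K) else 0) := by
        rw [← Equiv.sum_comp (Equiv.neg R)]
        simp only [Equiv.neg_apply, neg_add_eq_sub]
    _ = ∑ a, (∑ i ∈ range n, z⁻¹ ^ i * (χ ^ i) (-a)) *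
          ∑ j ∈ range n, w⁻¹ ^ j * (χ ^ j) (1 - a) := by
        simp only [sum_inv_pow_mul_mulChar_pow hχ hz, sum_inv_pow_mul_mulChar_pow hχ hw]
    _ = ∑ a, ∑ i ∈ range n, ∑ j ∈ range n,
          z⁻¹ ^ i * w⁻¹ ^ j * (χ ^ i) (-1) * ((χ ^ i) a * (χ ^ j) (1 - a)) := by
        refine sum_congr rfl fun a _ => ?_
        rw [sum_mul_sum]
        refine sum_congr rfl fun i _ => sum_congr rfl fun j _ => ?_
        rw [← neg_one_mul a, map_mul]
        ring
    _ = _ := by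
        rw [sum_comm]
        refine sum_congr rfl fun i _ => ?_
        rw [sum_comm]
        simp only [jacobiSum, mul_sum]

end CharacterSums

section GeneratorValues

variable {M K : Type*} [CommMonoid M] [CommMonoidWithZero K] {g : Mˣ}

theorem orderOf_mulChar_eq_orderOf_apply (hg : ∀ u, u ∈ Subgroup.zpowers g) (χ : MulChar M K) :
    orderOf χ = orderOf (χ g) := by
  rw [orderOf_eq_orderOf_iff]
  intro n
  rw [MulChar.eq_iff hg, MulChar.pow_apply_coe, MulChar.one_apply_coe]

theorem exists_mulChar_apply_generator_eq [Finite M] (hg : ∀ u, u ∈ Subgroup.zpowers g) {ω : K}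
    (hω : ω ^ Nat.card Mˣ = 1) : ∃ χ : MulChar M K, χ g = ω := by
  classical
  cases nonempty_fintype M
  rw [Nat.card_eq_fintype_card] at hω
  let ζ := rootsOfUnity.mkOfPowEq ω hω
  exact ⟨MulChar.ofRootOfUnity ζ.2 hg, MulChar.ofRootOfUnity_spec ζ.2 hg⟩

end GeneratorValues

theorem mulChar_sq_apply_neg_one {R K : Type*} [CommRing R] [CommMonoidWithZero K]
    (χ : MulChar R K) : (χ ^ 2) (-1) = 1 := by
  rw [MulChar.pow_apply' _ two_ne_zero, ← map_pow, neg_one_sq, map_one]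

section GaussAndJacobiSums

variable {F : Type*} [Field F] [Fintype F]

theorem gaussSum_mul_gaussSum_inv {K : Type*} [Field K] {χ : MulChar F K} (hχ : χ ≠ 1)
    {ψ : AddChar F K} (hψ : ψ.IsPrimitive) :
    gaussSum χ ψ * gaussSum χ⁻¹ ψ = χ (-1) * Fintype.card F := by
  rw [← mul_gaussSum_inv_eq_gaussSum χ⁻¹ ψ, mul_left_comm, gaussSum_mul_gaussSum_eq_card hχ hψ,
    MulChar.inv_apply', inv_neg_one]

theorem star_jacobiSum (χ φ : MulChar F ℂ) : star (jacobiSum χ φ) = jacobiSum χ⁻¹ φ⁻¹ := by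
  rw [← MulChar.star_eq_inv, ← MulChar.star_eq_inv]
  exact (jacobiSum_ringHomComp χ φ (starRingEnd ℂ)).symm

theorem normSq_jacobiSum {χ φ : MulChar F ℂ} (hχ : χ ≠ 1) (hφ : φ ≠ 1) (hχφ : χ * φ ≠ 1) :
    Complex.normSq (jacobiSum χ φ) = Fintype.card F := by
  have hchar : ringChar ℂ ≠ ringChar F := by
    simpa only [ringChar.eq_zero] using (CharP.ringChar_ne_zero_of_finite F).symm
  have h := jacobiSum_mul_jacobiSum_inv hchar hχ hφ hχφ
  rw [← star_jacobiSum] at h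
  exact_mod_cast (Complex.mul_conj _).symm.trans h

theorem exists_gaussianInt_eq_jacobiSum {χ φ : MulChar F ℂ} (hχ : χ ^ 4 = 1) (hφ : φ ^ 4 = 1) :
    ∃ z : GaussianInt, GaussianInt.toComplex z = jacobiSum χ φ := by
  have hI : Complex.I ∈ GaussianInt.toComplex.toIntAlgHom.range :=
    ⟨⟨0, 1⟩, by simp [GaussianInt.toComplex_def]⟩
  exact Algebra.adjoin_le (Set.singleton_subset_iff.mpr hI)
    (jacobiSum_mem_algebraAdjoin_of_pow_eq_one hχ hφ Complex.isPrimitiveRoot_I)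

end GaussAndJacobiSums

section QuarticCharacters

variable {F : Type*} [Field F] [Fintype F] {χ : MulChar F ℂ}

theorem gaussSum_sq_of_orderOf_eq_four (hχ : orderOf χ = 4) (ψ : AddChar F ℂ) :
    gaussSum χ ψ ^ 2 = jacobiSum χ χ * gaussSum (χ ^ 2) ψ := by
  have hne : χ * χ ≠ 1 := sq χ ▸ sq_ne_one_of_orderOf_eq_four hχ
  rw [sq, sq, mul_comm (jacobiSum χ χ), jacobiSum_mul_nontrivial hne]

theorem gaussSum_inv_sq_of_orderOf_eq_four (hχ : orderOf χ = 4) (ψ : AddChar F ℂ) :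
    gaussSum χ⁻¹ ψ ^ 2 = star (jacobiSum χ χ) * gaussSum (χ ^ 2) ψ := by
  rw [gaussSum_sq_of_orderOf_eq_four ((orderOf_inv χ).trans hχ), inv_pow,
    inv_sq_of_orderOf_eq_four hχ, star_jacobiSum]

theorem gaussSum_pow_two_sq_of_orderOf_eq_four (hχ : orderOf χ = 4) {ψ : AddChar F ℂ}
    (hψ : ψ.IsPrimitive) :
    gaussSum (χ ^ 2) ψ ^ 2 = Fintype.card F := by
  have h := gaussSum_mul_gaussSum_inv (sq_ne_one_of_orderOf_eq_four hχ) hψ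
  rwa [inv_sq_of_orderOf_eq_four hχ, mulChar_sq_apply_neg_one, one_mul, ← sq] at h

theorem jacobiSum_pow_two_right (hχ : orderOf χ = 4) :
    jacobiSum χ (χ ^ 2) = χ (-1) * jacobiSum χ χ := by
  let ψ := AddChar.FiniteField.primitiveChar_to_Complex F
  have hψ : ψ.IsPrimitive := AddChar.FiniteField.primitiveChar_to_Complex_isPrimitive F
  have hcard : (Fintype.card F : ℂ) ≠ 0 := Nat.cast_ne_zero.mpr Fintype.card_ne_zero
  have hsign : χ (-1) ^ 2 = 1 := by rw [← map_pow, neg_one_sq, map_one]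
  have hcube : χ * χ ^ 2 = χ⁻¹ := by rw [← pow_succ', pow_three_of_orderOf_eq_four hχ]
  have hne : χ * χ ^ 2 ≠ 1 := by
    rw [hcube]
    exact inv_ne_one.mpr (ne_one_of_orderOf_eq_four hχ)
  have hJ : gaussSum χ⁻¹ ψ * jacobiSum χ (χ ^ 2) = gaussSum χ ψ * gaussSum (χ ^ 2) ψ :=
    hcube ▸ jacobiSum_mul_nontrivial hne ψ
  apply mul_left_cancel₀ hcard
  calc Fintype.card F * jacobiSum χ (χ ^ 2)
      = χ (-1) * (χ (-1) * Fintype.card F) * jacobiSum χ (χ ^ 2) := by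
        linear_combination -(Fintype.card F * jacobiSum χ (χ ^ 2)) * hsign
    _ = χ (-1) * gaussSum χ ψ * (gaussSum χ⁻¹ ψ * jacobiSum χ (χ ^ 2)) := by
        rw [← gaussSum_mul_gaussSum_inv (ne_one_of_orderOf_eq_four hχ) hψ]
        ring
    _ = χ (-1) * gaussSum χ ψ ^ 2 * gaussSum (χ ^ 2) ψ := by
        rw [hJ]
        ring
    _ = χ (-1) * jacobiSum χ χ * gaussSum (χ ^ 2) ψ ^ 2 := by
        rw [gaussSum_sq_of_orderOf_eq_four hχ]
        ring
    _ = Fintype.card F * (χ (-1) * jacobiSum χ χ) := by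
        rw [gaussSum_pow_two_sq_of_orderOf_eq_four hχ hψ]
        ring

theorem jacobiSum_inv_pow_two (hχ : orderOf χ = 4) :
    jacobiSum χ⁻¹ (χ ^ 2) = χ (-1) * star (jacobiSum χ χ) := by
  have h := jacobiSum_pow_two_right ((orderOf_inv χ).trans hχ)
  rwa [inv_pow, inv_sq_of_orderOf_eq_four hχ, MulChar.inv_apply', inv_neg_one,
    ← star_jacobiSum] at h

theorem jacobiSum_pow_two_self (hχ : orderOf χ = 4) : jacobiSum (χ ^ 2) (χ ^ 2) = -1 := by
  have h := jacobiSum_nontrivial_inv (sq_ne_one_of_orderOf_eq_four hχ)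
  rwa [inv_sq_of_orderOf_eq_four hχ, mulChar_sq_apply_neg_one] at h

theorem sixteen_mul_cyclotomicNumber (hχ : orderOf χ = 4) (hneg : χ (-1) = -1) :
    (16 * cyclotomicNumber χ 1 Complex.I : ℝ) =
      Fintype.card F + 1 - 2 * (jacobiSum χ χ).re - 4 * (jacobiSum χ χ).im := by
  have h1 := ne_one_of_orderOf_eq_four hχ
  have h2 := sq_ne_one_of_orderOf_eq_four hχ
  have hinv : χ⁻¹ ≠ 1 := inv_ne_one.mpr h1
  have hneg_inv : χ⁻¹ (-1) = -1 := by rw [MulChar.inv_apply', inv_neg_one, hneg]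
  have hI3 : (-Complex.I) ^ 3 = Complex.I := by simp [pow_succ]
  have h := sq_mul_cyclotomicNumber (hχ ▸ pow_orderOf_eq_one χ) (one_pow 4) Complex.I_pow_four
  simp only [sum_range_succ, range_zero, sum_empty, zero_add, pow_zero, pow_one, inv_one, one_pow,
    one_mul, mul_one, pow_three_of_orderOf_eq_four hχ, MulChar.one_apply isUnit_one.neg,
    hneg, mulChar_sq_apply_neg_one, hneg_inv, Complex.inv_I, hI3,
    jacobiSum_comm χ 1, jacobiSum_comm (χ ^ 2) 1, jacobiSum_comm χ⁻¹ 1, jacobiSum_comm (χ ^ 2) χ,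
    jacobiSum_comm χ⁻¹ χ, jacobiSum_comm (χ ^ 2) χ⁻¹, jacobiSum_one_one,
    jacobiSum_one_nontrivial h1, jacobiSum_one_nontrivial h2, jacobiSum_one_nontrivial hinv,
    jacobiSum_pow_two_right hχ, jacobiSum_inv_pow_two hχ, jacobiSum_nontrivial_inv h1,
    jacobiSum_pow_two_self hχ, ← star_jacobiSum] at h
  have hre := congrArg Complex.re h
  norm_num [sq] at hre
  linarith

theorem exists_int_jacobiSum_eq (hχ : orderOf χ = 4) :
    ∃ a b : ℤ, (jacobiSum χ χ).re = a ∧ (jacobiSum χ χ).im = b ∧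
      a ^ 2 + b ^ 2 = Fintype.card F := by
  have hχ4 : χ ^ 4 = 1 := hχ ▸ pow_orderOf_eq_one χ
  obtain ⟨z, hz⟩ := exists_gaussianInt_eq_jacobiSum hχ4 hχ4
  have h1 := ne_one_of_orderOf_eq_four hχ
  have hnorm := normSq_jacobiSum h1 h1 (sq χ ▸ sq_ne_one_of_orderOf_eq_four hχ)
  rw [← hz, Complex.normSq_apply, ← GaussianInt.intCast_re, ← GaussianInt.intCast_im] at hnorm
  refine ⟨z.re, z.im, by simp [← hz], by simp [← hz], ?_⟩
  rw [sq, sq]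
  exact_mod_cast hnorm

theorem jacobiSum_im_eq_two_mul (hχ : orderOf χ = 4) (hneg : χ (-1) = -1)
    (hF : (Fintype.card F).Prime) {x y : ℤ} (hxy : (Fintype.card F : ℤ) = x ^ 2 + 4 * y ^ 2)
    (hcyc : 16 * (cyclotomicNumber χ 1 Complex.I : ℤ) = Fintype.card F + 1 + 2 * x - 8 * y) :
    (jacobiSum χ χ).im = 2 * y := by
  obtain ⟨a, b, hre, him, hab⟩ := exists_int_jacobiSum_eq hχ
  have hline : a + 2 * b = 4 * y - x := by
    have h := sixteen_mul_cyclotomicNumber hχ hneg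
    rw [hre, him] at h
    have h' : 16 * (cyclotomicNumber χ 1 Complex.I : ℤ) =
        Fintype.card F + 1 - 2 * a - 4 * b := by exact_mod_cast h
    linarith
  rw [him, eq_two_mul_of_sq_add_sq_eq_prime hF hxy hab hline]
  push_cast
  rfl

theorem four_mul_gaussPeriod (hχ : orderOf χ = 4) {ψ : AddChar F ℂ} (hψ : ψ ≠ 1) {z : ℂ}
    (hz : z ^ 4 = 1) :
    4 * gaussPeriod χ ψ z =
      -1 + z⁻¹ * gaussSum χ ψ + z⁻¹ ^ 2 * gaussSum (χ ^ 2) ψ + z⁻¹ ^ 3 * gaussSum χ⁻¹ ψ := by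
  have h := card_mul_gaussPeriod (hχ ▸ pow_orderOf_eq_one χ) ψ hz
  simpa only [sum_range_succ, sum_range_zero, zero_add, pow_zero, one_mul, pow_one,
    gaussSum_one_left hψ, pow_three_of_orderOf_eq_four hχ, Nat.cast_ofNat] using h

theorem sq_one_sub_I_mul_gaussSum_add (hχ : orderOf χ = 4) (hneg : χ (-1) = -1) {ψ : AddChar F ℂ}
    (hψ : ψ.IsPrimitive) :
    ((1 - Complex.I) * gaussSum χ ψ + (1 + Complex.I) * gaussSum χ⁻¹ ψ) ^ 2 =
      4 * (jacobiSum χ χ).im * gaussSum (χ ^ 2) ψ - 4 * Fintype.card F := by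
  set S := gaussSum (χ ^ 2) ψ
  have hG : gaussSum χ ψ ^ 2 = jacobiSum χ χ * S := gaussSum_sq_of_orderOf_eq_four hχ ψ
  have hG' : gaussSum χ⁻¹ ψ ^ 2 = star (jacobiSum χ χ) * S :=
    gaussSum_inv_sq_of_orderOf_eq_four hχ ψ
  have hGG' : gaussSum χ ψ * gaussSum χ⁻¹ ψ = -Fintype.card F := by
    rw [gaussSum_mul_gaussSum_inv (ne_one_of_orderOf_eq_four hχ) hψ, hneg, neg_one_mul]
  have hsub : jacobiSum χ χ - star (jacobiSum χ χ) = 2 * (jacobiSum χ χ).im * Complex.I := by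
    simpa using Complex.sub_conj (jacobiSum χ χ)
  calc ((1 - Complex.I) * gaussSum χ ψ + (1 + Complex.I) * gaussSum χ⁻¹ ψ) ^ 2
      = -2 * Complex.I * (gaussSum χ ψ ^ 2 - gaussSum χ⁻¹ ψ ^ 2) +
          4 * (gaussSum χ ψ * gaussSum χ⁻¹ ψ) := by
        linear_combination
          (gaussSum χ ψ - gaussSum χ⁻¹ ψ) ^ 2 * Complex.I_sq
    _ = -2 * Complex.I * (2 * (jacobiSum χ χ).im * Complex.I) * S - 4 * Fintype.card F := by
        rw [hG, hG', hGG', ← hsub]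
        ring
    _ = 4 * (jacobiSum χ χ).im * S - 4 * Fintype.card F := by
        linear_combination -4 * (jacobiSum χ χ).im * S * Complex.I_sq

theorem quartic_gaussPeriod_identity (hχ : orderOf χ = 4) (hneg : χ (-1) = -1)
    {ψ : AddChar F ℂ} (hψ : ψ.IsPrimitive) :
    4 * (gaussPeriod χ ψ (-Complex.I) + 2 * gaussPeriod χ ψ 1 + 3 * gaussPeriod χ ψ Complex.I) *
        (gaussPeriod χ ψ Complex.I + 2 * gaussPeriod χ ψ (-1) +
          3 * gaussPeriod χ ψ (-Complex.I)) =
      2 * (3 - 2 * (jacobiSum χ χ).im) *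
        (gaussPeriod χ ψ 1 + gaussPeriod χ ψ (-1) - gaussPeriod χ ψ Complex.I -
          gaussPeriod χ ψ (-Complex.I)) + 5 * Fintype.card F + 9 := by
  have hψ1 : ψ ≠ 1 := by simpa using hψ one_ne_zero
  have hI3 : Complex.I ^ 3 = -Complex.I := by simp [pow_succ]
  have hI3' : (-Complex.I) ^ 3 = Complex.I := by simp [pow_succ]
  have e0 := four_mul_gaussPeriod hχ hψ1 (one_pow 4)
  have e1 := four_mul_gaussPeriod hχ hψ1 Complex.I_pow_four
  have e2 := four_mul_gaussPeriod hχ hψ1 (z := -1) (by norm_num)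
  have e3 := four_mul_gaussPeriod hχ hψ1 (z := -Complex.I) (by simp [pow_succ])
  simp only [inv_one, one_pow, one_mul, inv_neg, Complex.inv_I, neg_neg, hI3, hI3', neg_sq,
    Complex.I_sq] at e0 e1 e2 e3
  set S := gaussSum (χ ^ 2) ψ
  set X := (1 - Complex.I) * gaussSum χ ψ + (1 + Complex.I) * gaussSum χ⁻¹ ψ with hX
  have hH : gaussPeriod χ ψ 1 + gaussPeriod χ ψ (-1) - gaussPeriod χ ψ Complex.I -
      gaussPeriod χ ψ (-Complex.I) = S := by
    linear_combination (e0 + e2 - e1 - e3) / 4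
  have hleft : gaussPeriod χ ψ (-Complex.I) + 2 * gaussPeriod χ ψ 1 +
      3 * gaussPeriod χ ψ Complex.I = (X - (3 + S)) / 2 := by
    linear_combination (e3 + 2 * e0 + 3 * e1) / 4 - hX / 2
  have hright : gaussPeriod χ ψ Complex.I + 2 * gaussPeriod χ ψ (-1) +
      3 * gaussPeriod χ ψ (-Complex.I) = -(X + (3 + S)) / 2 := by
    linear_combination (e1 + 2 * e2 + 3 * e3) / 4 + hX / 2
  rw [hH, hleft, hright]
  linear_combination gaussSum_pow_two_sq_of_orderOf_eq_four hχ hψ -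
    sq_one_sub_I_mul_gaussSum_add hχ hneg hψ

end QuarticCharacters

section PrimitiveRoots

variable {F : Type*} [Field F] [Fintype F] {θ : F}

theorem exists_mulChar_orderOf_eq_of_isPrimitiveRoot {K : Type*} [CommMonoidWithZero K]
    (hθ : IsPrimitiveRoot θ (Fintype.card F - 1)) {ω : K} {n : ℕ} (hω : IsPrimitiveRoot ω n)
    (hn : n ∣ Fintype.card F - 1) : ∃ χ : MulChar F K, orderOf χ = n ∧ χ θ = ω := by
  classical
  have hcard : Nat.card Fˣ = Fintype.card F - 1 := by
    rw [Nat.card_eq_fintype_card, Fintype.card_units]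
  obtain ⟨g, rfl⟩ := hθ.isUnit (Nat.sub_ne_zero_of_lt Fintype.one_lt_card)
  have htop : Subgroup.zpowers g = ⊤ := Subgroup.eq_top_of_card_eq _ <| by
    rw [Nat.card_zpowers, hcard, ← (IsPrimitiveRoot.coe_units_iff.mp hθ).eq_orderOf]
  have hg (u : Fˣ) : u ∈ Subgroup.zpowers g := htop ▸ Subgroup.mem_top u
  obtain ⟨χ, hχ⟩ := exists_mulChar_apply_generator_eq hg (hcard ▸ (hω.pow_eq_one_iff_dvd _).mpr hn)
  exact ⟨χ, by rw [orderOf_mulChar_eq_orderOf_apply hg, hχ, hω.eq_orderOf], hχ⟩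

theorem mulChar_apply_neg_one_of_apply_eq_I (hθ : IsPrimitiveRoot θ (Fintype.card F - 1))
    (hF : Fintype.card F % 8 = 5) {χ : MulChar F ℂ} (hχ : χ θ = Complex.I) : χ (-1) = -1 := by
  obtain ⟨m, hm⟩ : ∃ m, Fintype.card F - 1 = (4 * m + 2) * 2 := ⟨Fintype.card F / 8, by omega⟩
  have hneg : θ ^ (4 * m + 2) = -1 := (hθ.pow (by omega) hm).eq_neg_one_of_two_right
  rw [← hneg, map_pow, hχ, pow_add, pow_mul, Complex.I_pow_four, one_pow, one_mul, Complex.I_sq]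

end PrimitiveRoots

section CyclotomicClasses

variable {p θ i : ℕ} [Fact p.Prime] {χ : MulChar (ZMod p) ℂ}

theorem val_mem_cycD_iff (hp : 4 ∣ p - 1) (hθ : IsPrimitiveRoot (θ : ZMod p) (p - 1))
    (hχ : χ θ = Complex.I) (hi : i < 4) {a : ZMod p} :
    a.val ∈ cycD p θ i ↔ χ a = Complex.I ^ i := by
  simp only [cycD, mem_image, mem_range]
  constructor
  · rintro ⟨j, -, hj⟩
    have ha : a = (θ : ZMod p) ^ (i + 4 * j) := by
      rw [← ZMod.natCast_zmod_val a, ← hj, ZMod.natCast_mod, Nat.cast_pow]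
    rw [ha, map_pow, hχ, pow_add, pow_mul, Complex.I_pow_four, one_pow, mul_one]
  · intro h
    have : NeZero (p - 1) := ⟨Nat.sub_ne_zero_of_lt (Fact.out : p.Prime).one_lt⟩
    have ha : a ≠ 0 := by
      rintro rfl
      exact pow_ne_zero i Complex.I_ne_zero (h.symm.trans χ.map_zero)
    obtain ⟨k, hk, rfl⟩ := hθ.eq_pow_of_pow_eq_one (ZMod.pow_card_sub_one_eq_one ha)
    rw [map_pow, hχ, pow_eq_pow_mod k Complex.I_pow_four] at h
    have hki : k % 4 = i := Complex.isPrimitiveRoot_I.pow_inj (Nat.mod_lt k four_pos) hi h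
    refine ⟨k / 4, by omega, ?_⟩
    rw [← hki, Nat.mod_add_div, ← ZMod.val_natCast, Nat.cast_pow]

theorem cycD_eq_image_val (hp : 4 ∣ p - 1) (hθ : IsPrimitiveRoot (θ : ZMod p) (p - 1))
    (hχ : χ θ = Complex.I) (hi : i < 4) :
    cycD p θ i = ({a | χ a = Complex.I ^ i} : Finset (ZMod p)).image ZMod.val := by
  ext t
  simp only [mem_image, mem_filter_univ, ← val_mem_cycD_iff hp hθ hχ hi]
  refine ⟨fun ht => ?_, fun ⟨_, ha, hat⟩ => hat ▸ ha⟩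
  obtain ⟨j, -, hj⟩ := mem_image.mp ht
  have htp : t < p := hj ▸ Nat.mod_lt _ (Fact.out : p.Prime).pos
  exact ⟨t, by rwa [ZMod.val_cast_of_lt htp], ZMod.val_cast_of_lt htp⟩

/-- The sum of `β ^ t` over the cyclotomic class `D_i`. It is `η_i` for `β = 4` and the `i`-th
Gauss period of order 4 for `β` a primitive `p`-th root of unity, the two cases the proof
compares. -/
def cycSum {R : Type*} [CommSemiring R] (p θ : ℕ) (β : R) (i : ℕ) : R :=
  ∑ t ∈ cycD p θ i, β ^ t

/-- The right-hand side minus the left-hand side of the congruence, with the base `4` replaced by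
an arbitrary ring element `β`. -/
def cycSumDefect {R : Type*} [CommRing R] (p θ : ℕ) (y : ℤ) (β : R) : R :=
  2 * (3 - 4 * y) * (cycSum p θ β 0 + cycSum p θ β 2 - cycSum p θ β 1 - cycSum p θ β 3) +
      5 * p + 9 -
    4 * (cycSum p θ β 3 + 2 * cycSum p θ β 0 + 3 * cycSum p θ β 1) *
      (cycSum p θ β 1 + 2 * cycSum p θ β 2 + 3 * cycSum p θ β 3)

theorem map_cycSumDefect {R S F : Type*} [CommRing R] [CommRing S] [FunLike F R S]
    [RingHomClass F R S] (f : F) (p θ : ℕ) (y : ℤ) (β : R) :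
    f (cycSumDefect p θ y β) = cycSumDefect p θ y (f β) := by
  simp only [cycSumDefect, cycSum, map_sub, map_add, map_mul, map_sum, map_pow, map_intCast,
    map_natCast, map_ofNat]

theorem cycSum_eq_gaussPeriod (hp : 4 ∣ p - 1) (hθ : IsPrimitiveRoot (θ : ZMod p) (p - 1))
    (hχ : χ θ = Complex.I) (hi : i < 4) {ζ : ℂ} (hζ : ζ ^ p = 1) :
    cycSum p θ ζ i = gaussPeriod χ (AddChar.zmodChar p hζ) (Complex.I ^ i) := by
  rw [cycSum, cycD_eq_image_val hp hθ hχ hi, sum_image (ZMod.val_injective p).injOn]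
  rfl

theorem cycSum_quartic_identity (hp : 4 ∣ p - 1) (hθ : IsPrimitiveRoot (θ : ZMod p) (p - 1))
    (hord : orderOf χ = 4) (hχ : χ θ = Complex.I) (hneg : χ (-1) = -1) {ζ : ℂ}
    (hζ : IsPrimitiveRoot ζ p) :
    4 * (cycSum p θ ζ 3 + 2 * cycSum p θ ζ 0 + 3 * cycSum p θ ζ 1) *
        (cycSum p θ ζ 1 + 2 * cycSum p θ ζ 2 + 3 * cycSum p θ ζ 3) =
      2 * (3 - 2 * (jacobiSum χ χ).im) *
        (cycSum p θ ζ 0 + cycSum p θ ζ 2 - cycSum p θ ζ 1 - cycSum p θ ζ 3) + 5 * p + 9 := by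
  have h := quartic_gaussPeriod_identity hord hneg
    (AddChar.zmodChar_primitive_of_primitive_root p hζ)
  rw [ZMod.card] at h
  simpa [cycSum_eq_gaussPeriod hp hθ hχ, hζ.pow_eq_one] using h

theorem card_filter_succ_mem_cycD (hp : 4 ∣ p - 1)
    (hθ : IsPrimitiveRoot (θ : ZMod p) (p - 1)) (hχ : χ θ = Complex.I) {j : ℕ} (hi : i < 4)
    (hj : j < 4) :
    #{a ∈ cycD p θ i | (a + 1) % p ∈ cycD p θ j} =
      cyclotomicNumber χ (Complex.I ^ i) (Complex.I ^ j) := by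
  have hsucc (a : ZMod p) : (a.val + 1) % p = (a + 1).val := by
    rw [← ZMod.val_natCast, Nat.cast_succ, ZMod.natCast_zmod_val]
  rw [cycD_eq_image_val hp hθ hχ hi, filter_image, card_image_of_injective _ (ZMod.val_injective p),
    filter_filter]
  simp only [hsucc, val_mem_cycD_iff hp hθ hχ hj, cyclotomicNumber]

end CyclotomicClasses

theorem cycSumDefect_eq_zero_of_isPrimitiveRoot {p θ : ℕ} (hp : p.Prime) (hp8 : p % 8 = 5) {x y : ℤ}
    (hxy : (p : ℤ) = x ^ 2 + 4 * y ^ 2) (hθ : IsPrimitiveRoot (θ : ZMod p) (p - 1))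
    (hy : 16 * (#{a ∈ cycD p θ 0 | (a + 1) % p ∈ cycD p θ 1} : ℤ) = p + 1 + 2 * x - 8 * y)
    {ζ : ℂ} (hζ : IsPrimitiveRoot ζ p) :
    cycSumDefect p θ y ζ = 0 := by
  have : Fact p.Prime := ⟨hp⟩
  have hcard : Fintype.card (ZMod p) = p := ZMod.card p
  have h4 : 4 ∣ p - 1 := by omega
  have hθ' : IsPrimitiveRoot (θ : ZMod p) (Fintype.card (ZMod p) - 1) := hcard.symm ▸ hθ
  obtain ⟨χ, hord, hχ⟩ := exists_mulChar_orderOf_eq_of_isPrimitiveRoot hθ'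
    Complex.isPrimitiveRoot_I (hcard.symm ▸ h4)
  have hneg : χ (-1) = -1 := mulChar_apply_neg_one_of_apply_eq_I hθ' (hcard.symm ▸ hp8) hχ
  have him : (jacobiSum χ χ).im = 2 * y := by
    rw [card_filter_succ_mem_cycD h4 hθ hχ four_pos (by norm_num), pow_zero, pow_one] at hy
    exact jacobiSum_im_eq_two_mul hord hneg (hcard.symm ▸ hp) (hcard.symm ▸ hxy)
      (hcard.symm ▸ hy)
  have h := cycSum_quartic_identity h4 hθ hord hχ hneg hζ
  rw [him] at h
  rw [cycSumDefect, h]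
  push_cast
  ring

open Polynomial in
theorem lemma5_part3_general {R : Type*} [CommRing R] (β : R) {p : ℕ} (hp : p.Prime)
    (hp8 : p % 8 = 5) {x y : ℤ} (hxy : (p : ℤ) = x ^ 2 + 4 * y ^ 2) {θ : ℕ}
    (hθ : IsPrimitiveRoot (θ : ZMod p) (p - 1))
    (hy : 16 * (#{a ∈ cycD p θ 0 | (a + 1) % p ∈ cycD p θ 1} : ℤ) = p + 1 + 2 * x - 8 * y) :
    ∑ k ∈ range p, β ^ k ∣
      2 * (3 - 4 * y) * (cycSum p θ β 0 + cycSum p θ β 2 - cycSum p θ β 1 - cycSum p θ β 3)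
        + 5 * p + 9
        - 4 * (cycSum p θ β 3 + 2 * cycSum p θ β 0 + 3 * cycSum p θ β 1)
          * (cycSum p θ β 1 + 2 * cycSum p θ β 2 + 3 * cycSum p θ β 3) := by
  have hζ := Complex.isPrimitiveRoot_exp p hp.ne_zero
  have hzero : aeval (Complex.exp (2 * Real.pi * Complex.I / p))
      (cycSumDefect p θ y (X : ℤ[X])) = 0 := by
    rw [map_cycSumDefect, aeval_X, cycSumDefect_eq_zero_of_isPrimitiveRoot hp hp8 hxy hθ hy hζ]
  have hdvd := eval_cyclotomic_dvd_aeval_of_aeval_eq_zero hp.pos hζ hzero β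
  have : Fact p.Prime := ⟨hp⟩
  rwa [map_cycSumDefect, aeval_X, cyclotomic_prime, eval_geom_sum] at hdvd

theorem lemma5_part3
    (p : ℕ) (hp : p.Prime) (hp8 : p % 8 = 5)
    (x y : ℤ) (hx : x % 4 = 1) (hxy : (p : ℤ) = x ^ 2 + 4 * y ^ 2)
    (θ : ℕ) (hθ : IsPrimitiveRoot (θ : ZMod p) (p - 1))
    (hy : 16 * (((cycD p θ 0).filter (fun a => (a + 1) % p ∈ cycD p θ 1)).card : ℤ)
        = (p : ℤ) + 1 + 2 * x - 8 * y)
    :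
    4 * (eta4 p θ 3 + 2 * eta4 p θ 0 + 3 * eta4 p θ 1) * (eta4 p θ 1 + 2 * eta4 p θ 2 + 3 * eta4 p θ 3)
      ≡ 2 * (3 - 4 * y) * Hval p θ + 5 * (p : ℤ) + 9 [ZMOD ((4 : ℤ) ^ p - 1) / 3] := by
  have hmod : ((4 : ℤ) ^ p - 1) / 3 = ∑ k ∈ range p, 4 ^ k :=
    Int.ediv_eq_of_eq_mul_left three_ne_zero (geom_sum_mul 4 p).symm
  rw [hmod]
  exact Int.modEq_iff_dvd.mpr (lemma5_part3_general 4 hp hp8 hxy hθ hy)
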